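/- Let α > 1, let Ω ⊆ ℝⁿ be open, and let ψ : ℝⁿ → ℝ be twice continuously differentiable on Ω with ψ < 0 and Δψ ≥ 0 on Ω. Then for every smooth φ : ℝⁿ → ℝ with compact support contained in Ω, one has ∫_Ω φ² Δψ ≤ (4/(α−1)) ∫_Ω (1 + |ψ|)^α |∇φ|², where the integrals are with respect to Lebesgue measure. -/

import Mathlib

open MeasureTheory Metric
open scoped Real Topology ENNReal

noncomputable section

/-- The Euclidean Laplacian `Δψ(x) = Σᵢ ∂²ψ/∂xᵢ²(x)`. -/
def lap (n : ℕ) (ψ : EuclideanSpace ℝ (Fin n) → ℝ) (x : EuclideanSpace ℝ (Fin n)) : ℝ :=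
  ∑ i : Fin n, fderiv ℝ (fun y => fderiv ℝ ψ y (EuclideanSpace.single i 1)) x
    (EuclideanSpace.single i 1)

/-!
Testing the divergence theorem against the field `φ² g(ψ) ∇ψ` with `g' > 0` gives
`∫ φ² g(ψ) Δψ = -∫ 2 φ g(ψ) ⟪∇φ, ∇ψ⟫ - ∫ φ² g'(ψ) |∇ψ|²`, and Young's inequality absorbs the cross
term into the last one, leaving at most `∫ (g² / g')(ψ) |∇φ|²`. For `g t = 1 + (1 - t) ^ (1 - α)`
and `t ≤ 0` one has `1 ≤ g t ≤ 2` and `g' t = (α - 1) (1 - t) ^ (-α)`, so that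
`g² / g' ≤ 4 / (α - 1) * (1 - t) ^ α`, while `φ² Δψ ≤ φ² g(ψ) Δψ` by subharmonicity.
-/

open Set InnerProductSpace
open scoped Gradient Laplacian

section TestFunctions

theorem contDiff_of_contDiffOn_of_tsupport_subset {𝕜 E F : Type*} [NontriviallyNormedField 𝕜]
    [NormedAddCommGroup E] [NormedSpace 𝕜 E] [NormedAddCommGroup F] [NormedSpace 𝕜 F]
    {k : WithTop ℕ∞} {f : E → F} {s : Set E} (hf : ContDiffOn 𝕜 k f s) (hs : IsOpen s)
    (hfs : tsupport f ⊆ s) : ContDiff 𝕜 k f :=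
  contMDiff_iff_contDiff.1 <| contMDiff_of_tsupport fun _ hx =>
    (hf.contDiffAt (hs.mem_nhds (hfs hx))).contMDiffAt

theorem integrable_mul_of_continuousOn_isCompact {X : Type*} [TopologicalSpace X] [T2Space X]
    [MeasurableSpace X] [BorelSpace X] {μ : Measure X} [IsFiniteMeasureOnCompacts μ] {K : Set X}
    {u w : X → ℝ} (hK : IsCompact K) (hu : ContinuousOn u K) (hu0 : ∀ x ∉ K, u x = 0)
    (hw : ContinuousOn w K) : Integrable (fun x => u x * w x) μ :=
  ((hu.mul hw).integrableOn_compact hK).integrable_of_forall_notMem_eq_zero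
    fun x hx => mul_eq_zero_of_left (hu0 x hx) (w x)

end TestFunctions

section IntegrationByParts

variable {E : Type*} [NormedAddCommGroup E] [NormedSpace ℝ E] {Ω : Set E} {η f : E → ℝ}

theorem continuousOn_fderiv_fderiv_apply (hΩ : IsOpen Ω) (hf : ContDiffOn ℝ 2 f Ω) (v w : E) :
    ContinuousOn (fun x => fderiv ℝ (fderiv ℝ f · v) x w) Ω :=
  (((hf.fderiv_of_isOpen hΩ le_rfl).clm_apply contDiffOn_const).continuousOn_fderiv_of_isOpen hΩ
    le_rfl).clm_apply continuousOn_const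

variable [FiniteDimensional ℝ E] [MeasurableSpace E] [BorelSpace E] {μ : Measure E}
  [μ.IsAddHaarMeasure]

theorem setIntegral_mul_fderiv_eq_neg_fderiv_mul (hΩ : IsOpen Ω) (hη : ContDiff ℝ 1 η)
    (hηs : HasCompactSupport η) (hηΩ : tsupport η ⊆ Ω) (hf : ContDiffOn ℝ 1 f Ω) (v : E) :
    ∫ x in Ω, η x * fderiv ℝ f x v ∂μ = -∫ x in Ω, fderiv ℝ η x v * f x ∂μ := by
  have hη' : Continuous (fderiv ℝ η · v) :=
    (hη.continuous_fderiv one_ne_zero).clm_apply continuous_const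
  have hf' : ContinuousOn (fderiv ℝ f · v) Ω :=
    (hf.continuousOn_fderiv_of_isOpen hΩ le_rfl).clm_apply continuousOn_const
  have hη0 : ∀ x ∉ tsupport η, η x = 0 := fun _ => image_eq_zero_of_notMem_tsupport
  have hη'0 : ∀ x ∉ tsupport η, fderiv ℝ η x v = 0 := fun x hx => by
    rw [fderiv_of_notMem_tsupport ℝ hx, zero_apply]
  rw [setIntegral_eq_integral_of_forall_compl_eq_zero fun x hx => by
      rw [hη0 x (notMem_subset hηΩ hx), zero_mul],
    setIntegral_eq_integral_of_forall_compl_eq_zero fun x hx => by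
      rw [hη'0 x (notMem_subset hηΩ hx), zero_mul]]
  exact integral_mul_fderiv_eq_neg_fderiv_mul_of_integrable
    (integrable_mul_of_continuousOn_isCompact hηs hη'.continuousOn hη'0
      (hf.continuousOn.mono hηΩ))
    (integrable_mul_of_continuousOn_isCompact hηs hη.continuous.continuousOn hη0 (hf'.mono hηΩ))
    (integrable_mul_of_continuousOn_isCompact hηs hη.continuous.continuousOn hη0
      (hf.continuousOn.mono hηΩ))
    (fun x _ => hη.differentiable one_ne_zero x)
    (fun x hx => (hf.differentiableOn one_ne_zero).differentiableAt (hΩ.mem_nhds (hηΩ hx)))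

end IntegrationByParts

section Gradient

variable {E : Type*} [NormedAddCommGroup E] [InnerProductSpace ℝ E] [CompleteSpace E]
  {Ω : Set E} {f ψ φ : E → ℝ} {g : ℝ → ℝ} {x : E}

theorem gradient_of_notMem_tsupport (hx : x ∉ tsupport f) : ∇ f x = 0 := by
  rw [gradient, fderiv_of_notMem_tsupport ℝ hx, map_zero]

theorem continuousOn_gradient (hΩ : IsOpen Ω) (hf : ContDiffOn ℝ 1 f Ω) :
    ContinuousOn (∇ f) Ω :=
  (toDual ℝ E).symm.continuous.comp_continuousOn (hf.continuousOn_fderiv_of_isOpen hΩ le_rfl)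

theorem integrable_mul_norm_gradient_sq [MeasurableSpace E] [BorelSpace E] {μ : Measure E}
    [IsFiniteMeasureOnCompacts μ] {w : E → ℝ} (hφ : ContDiff ℝ 1 φ) (hφs : HasCompactSupport φ)
    (hw : ContinuousOn w (tsupport φ)) : Integrable (fun x => w x * ‖∇ φ x‖ ^ 2) μ := by
  have hgrad : Continuous (∇ φ) :=
    continuousOn_univ.1 (continuousOn_gradient isOpen_univ hφ.contDiffOn)
  simpa only [mul_comm] using integrable_mul_of_continuousOn_isCompact
    (u := fun x => ‖∇ φ x‖ ^ 2) hφs (hgrad.norm.pow 2).continuousOn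
    (fun x hx => by rw [gradient_of_notMem_tsupport hx, norm_zero, zero_pow two_ne_zero]) hw

theorem inner_gradient_eq_sum {ι : Type*} [Fintype ι] (b : OrthonormalBasis ι ℝ E)
    (f g : E → ℝ) (x : E) :
    ⟪∇ f x, ∇ g x⟫_ℝ = ∑ i, fderiv ℝ f x (b i) * fderiv ℝ g x (b i) := by
  simp [← b.sum_inner_mul_inner (∇ f x) (∇ g x)]

theorem inner_gradient_sq_mul_comp (hφ : DifferentiableAt ℝ φ x)
    (hψ : DifferentiableAt ℝ ψ x) (hg : DifferentiableAt ℝ g (ψ x)) :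
    ⟪∇ (fun y => φ y ^ 2 * g (ψ y)) x, ∇ ψ x⟫_ℝ =
      2 * (φ x * g (ψ x) * ⟪∇ φ x, ∇ ψ x⟫_ℝ) + deriv g (ψ x) * (φ x * ‖∇ ψ x‖) ^ 2 := by
  have h := ((hφ.hasFDerivAt.pow 2).mul
    (hg.hasDerivAt.comp_hasFDerivAt x hψ.hasFDerivAt)).fderiv
  change fderiv ℝ (fun y => φ y ^ 2 * g (ψ y)) x = _ at h
  rw [mul_pow, ← real_inner_self_eq_norm_sq]
  simp only [inner_gradient_left, h, Function.comp_apply, add_apply, smul_apply, smul_eq_mul,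
    nsmul_eq_mul]
  ring

theorem neg_two_mul_inner_sub_le_sq_div {F : Type*} [NormedAddCommGroup F]
    [InnerProductSpace ℝ F] (u v : F) {c : ℝ} (hc : 0 < c) :
    -(2 * ⟪u, v⟫_ℝ) - c * ‖v‖ ^ 2 ≤ ‖u‖ ^ 2 / c := by
  have h : ‖u + c • v‖ ^ 2 = ‖u‖ ^ 2 + c * (2 * ⟪u, v⟫_ℝ + c * ‖v‖ ^ 2) := by
    rw [norm_add_sq_real, real_inner_smul_right, norm_smul, mul_pow, Real.norm_eq_abs, sq_abs]
    ring
  rw [le_div_iff₀ hc]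
  linarith [sq_nonneg ‖u + c • v‖]

theorem neg_inner_gradient_sq_mul_comp_le (hφ : DifferentiableAt ℝ φ x)
    (hψ : DifferentiableAt ℝ ψ x) (hg : 0 < deriv g (ψ x)) :
    -⟪∇ (fun y => φ y ^ 2 * g (ψ y)) x, ∇ ψ x⟫_ℝ ≤
      g (ψ x) ^ 2 / deriv g (ψ x) * ‖∇ φ x‖ ^ 2 := by
  have young := neg_two_mul_inner_sub_le_sq_div (g (ψ x) • ∇ φ x) (φ x • ∇ ψ x) hg
  simp only [real_inner_smul_left, real_inner_smul_right, norm_smul, mul_pow, Real.norm_eq_abs,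
    sq_abs] at young
  rw [inner_gradient_sq_mul_comp hφ hψ (differentiableAt_of_deriv_ne_zero hg.ne'),
    div_mul_eq_mul_div]
  linarith

end Gradient

section Laplacian

variable {E : Type*} [NormedAddCommGroup E] [InnerProductSpace ℝ E] [FiniteDimensional ℝ E]
  {Ω : Set E}

theorem laplacian_eq_sum_fderiv_fderiv {F ι : Type*} [NormedAddCommGroup F] [NormedSpace ℝ F]
    [Fintype ι] {f : E → F} {x : E} (b : OrthonormalBasis ι ℝ E) (hf : ContDiffAt ℝ 2 f x) :
    Δ f x = ∑ i, fderiv ℝ (fderiv ℝ f · (b i)) x (b i) := by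
  have hf' : DifferentiableAt ℝ (fderiv ℝ f) x :=
    (hf.fderiv_right (m := 1) le_rfl).differentiableAt one_ne_zero
  simp only [laplacian_eq_iteratedFDeriv_orthonormalBasis f b, iteratedFDeriv_two_apply]
  refine Finset.sum_congr rfl fun i _ => ?_
  simp [fderiv_clm_apply hf' (differentiableAt_const (b i))]

theorem lap_eqOn_laplacian {n : ℕ} {Ω : Set (EuclideanSpace ℝ (Fin n))}
    {ψ : EuclideanSpace ℝ (Fin n) → ℝ} (hΩ : IsOpen Ω) (hψ : ContDiffOn ℝ 2 ψ Ω) :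
    EqOn (lap n ψ) (Δ ψ) Ω := fun x hx => by
  rw [laplacian_eq_sum_fderiv_fderiv (EuclideanSpace.basisFun (Fin n) ℝ)
    (hψ.contDiffAt (hΩ.mem_nhds hx))]
  simp only [lap, EuclideanSpace.basisFun_apply]

theorem continuousOn_laplacian {f : E → ℝ} (hΩ : IsOpen Ω) (hf : ContDiffOn ℝ 2 f Ω) :
    ContinuousOn (Δ f) Ω := by
  let b := stdOrthonormalBasis ℝ E
  exact (continuousOn_finsetSum _ fun i _ =>
    continuousOn_fderiv_fderiv_apply hΩ hf (b i) (b i)).congr fun x hx =>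
      laplacian_eq_sum_fderiv_fderiv b (hf.contDiffAt (hΩ.mem_nhds hx))

variable [MeasurableSpace E] [BorelSpace E] {μ : Measure E} [μ.IsAddHaarMeasure] {η ψ : E → ℝ}

theorem setIntegral_mul_laplacian_eq_neg_inner_gradient (hΩ : IsOpen Ω) (hη : ContDiff ℝ 1 η)
    (hηs : HasCompactSupport η) (hηΩ : tsupport η ⊆ Ω) (hψ : ContDiffOn ℝ 2 ψ Ω) :
    ∫ x in Ω, η x * Δ ψ x ∂μ = -∫ x in Ω, ⟪∇ η x, ∇ ψ x⟫_ℝ ∂μ := by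
  let b := stdOrthonormalBasis ℝ E
  have hψ' (i) : ContDiffOn ℝ 1 (fderiv ℝ ψ · (b i)) Ω :=
    (hψ.fderiv_of_isOpen hΩ le_rfl).clm_apply contDiffOn_const
  have hη' (i) : Continuous (fderiv ℝ η · (b i)) :=
    (hη.continuous_fderiv one_ne_zero).clm_apply continuous_const
  have hint (i) : Integrable (fun x => η x * fderiv ℝ (fderiv ℝ ψ · (b i)) x (b i)) μ :=
    integrable_mul_of_continuousOn_isCompact hηs hη.continuous.continuousOn
      (fun _ => image_eq_zero_of_notMem_tsupport)
      ((continuousOn_fderiv_fderiv_apply hΩ hψ (b i) (b i)).mono hηΩ)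
  have hint' (i) : Integrable (fun x => fderiv ℝ η x (b i) * fderiv ℝ ψ x (b i)) μ :=
    integrable_mul_of_continuousOn_isCompact hηs (hη' i).continuousOn
      (fun x hx => by rw [fderiv_of_notMem_tsupport ℝ hx, zero_apply])
      ((hψ' i).continuousOn.mono hηΩ)
  calc ∫ x in Ω, η x * Δ ψ x ∂μ
      = ∫ x in Ω, ∑ i, η x * fderiv ℝ (fderiv ℝ ψ · (b i)) x (b i) ∂μ :=
        setIntegral_congr_fun hΩ.measurableSet fun x hx => by
          simp only [laplacian_eq_sum_fderiv_fderiv b (hψ.contDiffAt (hΩ.mem_nhds hx)),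
            Finset.mul_sum]
    _ = ∑ i, ∫ x in Ω, η x * fderiv ℝ (fderiv ℝ ψ · (b i)) x (b i) ∂μ :=
        integral_finsetSum _ fun i _ => (hint i).integrableOn
    _ = -∑ i, ∫ x in Ω, fderiv ℝ η x (b i) * fderiv ℝ ψ x (b i) ∂μ := by
        simp only [setIntegral_mul_fderiv_eq_neg_fderiv_mul hΩ hη hηs hηΩ (hψ' _),
          Finset.sum_neg_distrib]
    _ = -∫ x in Ω, ⟪∇ η x, ∇ ψ x⟫_ℝ ∂μ := by
        simp only [inner_gradient_eq_sum b]
        rw [integral_finsetSum _ fun i _ => (hint' i).integrableOn]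

end Laplacian

section Caccioppoli

variable {E : Type*} [NormedAddCommGroup E] [InnerProductSpace ℝ E] [FiniteDimensional ℝ E]
  [MeasurableSpace E] [BorelSpace E] {μ : Measure E} [μ.IsAddHaarMeasure] {Ω : Set E}
  {φ ψ : E → ℝ} {g : ℝ → ℝ} {I : Set ℝ}

theorem setIntegral_sq_mul_comp_mul_laplacian_le (hΩ : IsOpen Ω) (hI : IsOpen I)
    (hψ : ContDiffOn ℝ 2 ψ Ω) (hψI : MapsTo ψ Ω I) (hg : ContDiffOn ℝ 1 g I)
    (hg' : ∀ t ∈ I, 0 < deriv g t) (hφ : ContDiff ℝ 1 φ) (hφs : HasCompactSupport φ)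
    (hφΩ : tsupport φ ⊆ Ω) :
    ∫ x in Ω, φ x ^ 2 * g (ψ x) * Δ ψ x ∂μ ≤
      ∫ x in Ω, g (ψ x) ^ 2 / deriv g (ψ x) * ‖∇ φ x‖ ^ 2 ∂μ := by
  let η : E → ℝ := fun x => φ x ^ 2 * g (ψ x)
  have hψ1 : ContDiffOn ℝ 1 ψ Ω := hψ.of_le one_le_two
  have hηφ : tsupport η ⊆ tsupport φ := closure_mono fun x hx hφx => hx (by simp [η, hφx])
  have hηs : HasCompactSupport η := hφs.of_isClosed_subset (isClosed_tsupport η) hηφ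
  have hη : ContDiff ℝ 1 η := contDiff_of_contDiffOn_of_tsupport_subset
    ((hφ.pow 2).contDiffOn.mul (hg.comp hψ1 hψI)) hΩ (hηφ.trans hφΩ)
  have hint : Integrable (fun x => ⟪∇ η x, ∇ ψ x⟫_ℝ) μ :=
    ((((continuousOn_gradient hΩ hη.contDiffOn).inner (continuousOn_gradient hΩ hψ1)).mono
      (hηφ.trans hφΩ)).integrableOn_compact hηs).integrable_of_forall_notMem_eq_zero
      fun x hx => by rw [gradient_of_notMem_tsupport hx, inner_zero_left]
  have hw : ContinuousOn (fun x => g (ψ x) ^ 2 / deriv g (ψ x)) Ω :=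
    ((hg.continuousOn.pow 2).div (hg.continuousOn_deriv_of_isOpen hI le_rfl)
      fun t ht => (hg' t ht).ne').comp hψ.continuousOn hψI
  rw [setIntegral_mul_laplacian_eq_neg_inner_gradient hΩ hη hηs (hηφ.trans hφΩ) hψ,
    ← integral_neg]
  exact setIntegral_mono_on hint.neg.integrableOn
    (integrable_mul_norm_gradient_sq hφ hφs (hw.mono hφΩ)).integrableOn hΩ.measurableSet
    fun x hx => neg_inner_gradient_sq_mul_comp_le (hφ.differentiable one_ne_zero x)
      ((hψ1.differentiableOn one_ne_zero).differentiableAt (hΩ.mem_nhds hx)) (hg' _ (hψI hx))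

theorem setIntegral_sq_mul_laplacian_le (hΩ : IsOpen Ω) (hI : IsOpen I)
    (hψ : ContDiffOn ℝ 2 ψ Ω) (hψI : MapsTo ψ Ω I) (hψsub : ∀ x ∈ Ω, 0 ≤ Δ ψ x)
    (hg : ContDiffOn ℝ 1 g I) (hg' : ∀ t ∈ I, 0 < deriv g t) (hg1 : ∀ t ∈ I, 1 ≤ g t)
    (hφ : ContDiff ℝ 1 φ) (hφs : HasCompactSupport φ) (hφΩ : tsupport φ ⊆ Ω) :
    ∫ x in Ω, φ x ^ 2 * Δ ψ x ∂μ ≤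
      ∫ x in Ω, g (ψ x) ^ 2 / deriv g (ψ x) * ‖∇ φ x‖ ^ 2 ∂μ := by
  have hΔ : ContinuousOn (Δ ψ) Ω := continuousOn_laplacian hΩ hψ
  have hgΔ : ContinuousOn (fun x => g (ψ x) * Δ ψ x) Ω :=
    (hg.continuousOn.comp hψ.continuousOn hψI).mul hΔ
  have hint {f : E → ℝ} (hf : ContinuousOn f Ω) : Integrable (fun x => φ x ^ 2 * f x) μ :=
    integrable_mul_of_continuousOn_isCompact hφs (hφ.continuous.pow 2).continuousOn
      (fun x hx => by rw [image_eq_zero_of_notMem_tsupport hx, zero_pow two_ne_zero])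
      (hf.mono hφΩ)
  refine le_trans ?_ (setIntegral_sq_mul_comp_mul_laplacian_le hΩ hI hψ hψI hg hg' hφ hφs hφΩ)
  simp only [mul_assoc]
  exact setIntegral_mono_on (hint hΔ).integrableOn (hint hgΔ).integrableOn
    hΩ.measurableSet
    fun x hx => mul_le_mul_of_nonneg_left
      (le_mul_of_one_le_left (hψsub x hx) (hg1 _ (hψI hx))) (sq_nonneg _)

end Caccioppoli

section Weight

/-- The increasing function `g` of the test field `φ² g(ψ) ∇ψ`, used for `t < 1` only. -/
def testWeight (α t : ℝ) : ℝ := 1 + (1 - t) ^ (1 - α)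

variable {α t : ℝ}

theorem one_le_testWeight (ht : t ≤ 1) : 1 ≤ testWeight α t :=
  le_add_of_nonneg_right (Real.rpow_nonneg (sub_nonneg.2 ht) _)

theorem testWeight_le_two (hα : 1 ≤ α) (ht : t ≤ 0) : testWeight α t ≤ 2 := by
  have : (1 - t) ^ (1 - α) ≤ 1 :=
    Real.rpow_le_one_of_one_le_of_nonpos (by linarith) (by linarith)
  rw [testWeight]
  linarith

theorem contDiffOn_testWeight {k : WithTop ℕ∞} : ContDiffOn ℝ k (testWeight α) (Iio 1) :=
  contDiffOn_const.add <| (contDiffOn_const.sub contDiffOn_id).rpow_const_of_ne fun _ ht =>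
    (sub_pos.2 ht).ne'

theorem deriv_testWeight (ht : t < 1) :
    deriv (testWeight α) t = (α - 1) * ((1 - t) ^ α)⁻¹ := by
  have h := (((hasDerivAt_id t).const_sub 1).rpow_const (p := 1 - α)
    (Or.inl (sub_pos.2 ht).ne')).const_add 1
  rw [← Real.rpow_neg (sub_pos.2 ht).le]
  refine h.deriv.trans ?_
  rw [id_eq, sub_sub_cancel_left]
  ring

theorem deriv_testWeight_pos (hα : 1 < α) (ht : t < 1) : 0 < deriv (testWeight α) t := by
  rw [deriv_testWeight ht]
  exact mul_pos (sub_pos.2 hα) (inv_pos.2 (Real.rpow_pos_of_pos (sub_pos.2 ht) α))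

theorem testWeight_sq_div_deriv_le (hα : 1 < α) (ht : t ≤ 0) :
    testWeight α t ^ 2 / deriv (testWeight α) t ≤ 4 / (α - 1) * (1 + |t|) ^ α := by
  have hg : testWeight α t ^ 2 ≤ 2 ^ 2 := pow_le_pow_left₀
    (zero_le_one.trans (one_le_testWeight (by linarith))) (testWeight_le_two hα.le ht) 2
  calc testWeight α t ^ 2 / deriv (testWeight α) t
      ≤ 2 ^ 2 / deriv (testWeight α) t :=
        div_le_div_of_nonneg_right hg (deriv_testWeight_pos hα (by linarith)).le
    _ = 4 / (α - 1) * (1 + |t|) ^ α := by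
        rw [deriv_testWeight (by linarith), abs_of_nonpos ht, ← sub_eq_add_neg]
        field_simp
        ring

end Weight

theorem stmt_8_general {E : Type*} [NormedAddCommGroup E] [InnerProductSpace ℝ E]
    [FiniteDimensional ℝ E] [MeasurableSpace E] [BorelSpace E] {μ : Measure E}
    [μ.IsAddHaarMeasure] {α : ℝ} (hα : 1 < α) {Ω : Set E} (hΩ : IsOpen Ω) {ψ φ : E → ℝ}
    (hψ : ContDiffOn ℝ 2 ψ Ω) (hψ0 : ∀ x ∈ Ω, ψ x ≤ 0) (hψsub : ∀ x ∈ Ω, 0 ≤ Δ ψ x)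
    (hφ : ContDiff ℝ 1 φ) (hφs : HasCompactSupport φ) (hφΩ : tsupport φ ⊆ Ω) :
    ∫ x in Ω, φ x ^ 2 * Δ ψ x ∂μ ≤
      4 / (α - 1) * ∫ x in Ω, (1 + |ψ x|) ^ α * ‖∇ φ x‖ ^ 2 ∂μ := by
  have hψ1 : MapsTo ψ Ω (Iio 1) := fun x hx => (hψ0 x hx).trans_lt one_pos
  have hweight : ContinuousOn (fun x => (1 + |ψ x|) ^ α) Ω :=
    (continuousOn_const.add hψ.continuousOn.abs).rpow_const fun x _ =>
      Or.inl (add_pos_of_pos_of_nonneg one_pos (abs_nonneg (ψ x))).ne'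
  refine (setIntegral_sq_mul_laplacian_le hΩ isOpen_Iio hψ hψ1 hψsub contDiffOn_testWeight
    (fun _ => deriv_testWeight_pos hα) (fun _ ht => one_le_testWeight ht.le) hφ hφs hφΩ).trans ?_
  rw [← integral_const_mul]
  refine integral_mono_of_nonneg ?_ ((integrable_mul_norm_gradient_sq hφ hφs
    (hweight.mono hφΩ)).integrableOn.const_mul _) ?_
  · filter_upwards [ae_restrict_mem hΩ.measurableSet] with x hx
    exact mul_nonneg (div_nonneg (sq_nonneg _) (deriv_testWeight_pos hα (hψ1 hx)).le)
      (sq_nonneg _)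
  · filter_upwards [ae_restrict_mem hΩ.measurableSet] with x hx
    rw [← mul_assoc]
    exact mul_le_mul_of_nonneg_right (testWeight_sq_div_deriv_le hα (hψ0 x hx)) (sq_nonneg _)

/-- For a negative `C²` subharmonic `ψ` on `Ω` and smooth `φ` compactly
supported in `Ω`: `∫ φ²Δψ ≤ (4/(α−1)) ∫ (1+|ψ|)^α |∇φ|²`. -/
theorem stmt_8 (n : ℕ) (α : ℝ) (hα : 1 < α)
    (Ω : Set (EuclideanSpace ℝ (Fin n))) (hΩ : IsOpen Ω)
    (ψ φ : EuclideanSpace ℝ (Fin n) → ℝ)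
    (hψ : ContDiffOn ℝ 2 ψ Ω)
    (hψneg : ∀ x ∈ Ω, ψ x < 0) (hψsub : ∀ x ∈ Ω, 0 ≤ lap n ψ x)
    (hφ : ContDiff ℝ (⊤ : ℕ∞) φ) (hφs : HasCompactSupport φ) (hφΩ : tsupport φ ⊆ Ω) :
    (∫ x in Ω, φ x ^ 2 * lap n ψ x) ≤
      4 / (α - 1) * ∫ x in Ω, (1 + |ψ x|) ^ α * ‖gradient φ x‖ ^ 2 := by
  have hlap : EqOn (lap n ψ) (Δ ψ) Ω := lap_eqOn_laplacian hΩ hψ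
  rw [setIntegral_congr_fun hΩ.measurableSet fun x hx => congrArg (φ x ^ 2 * ·) (hlap hx)]
  exact stmt_8_general hα hΩ hψ (fun x hx => (hψneg x hx).le)
    (fun x hx => hlap hx ▸ hψsub x hx) (hφ.of_le (by exact_mod_cast le_top)) hφs hφΩ
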